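/- arXiv:1409.3583 — 2 statements merged into one kernel-verified Lean document; each statement's English description precedes it below -/
import Mathlib

section
/- Let G be a finite simple graph that is both gap-free and cricket-free, with nonzero 4-path ideal I_4(G), let e = xy be an edge of G, and let G' be the simple graph whose edge ideal equals (I_4(G) : x_x x_y). Then the complement graph (G')^c is chordal; equivalently, reg(I_4(G) : x_x x_y) ≤ 2. -/
open MvPolynomial

/-! Graph-theoretic definitions -/

/-- A list of vertices is a path in `G`: consecutive vertices are adjacent and all
vertices are distinct. -/
def SimpleGraph.IsPathList {V : Type*} (G : SimpleGraph V) (l : List V) : Prop :=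
  l.Chain' G.Adj ∧ l.Nodup

/-- The `t`-path ideal of a graph: the ideal generated by the monomials
`x_{v_1} ⋯ x_{v_t}` where `v_1 ⋯ v_t` is a path on `t` distinct vertices of `G`. -/
noncomputable def pathIdeal {V K : Type*} [CommRing K] (G : SimpleGraph V) (t : ℕ) :
    Ideal (MvPolynomial V K) :=
  Ideal.span { p | ∃ l : List V, G.IsPathList l ∧ l.length = t ∧ p = (l.map X).prod }

/-- The edge ideal of a graph. -/
noncomputable def edgeIdeal {V K : Type*} [CommRing K] (G : SimpleGraph V) :
    Ideal (MvPolynomial V K) :=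
  Ideal.span { p | ∃ u v, G.Adj u v ∧ p = X u * X v }

/-- `G` is gap-free: any two vertex-disjoint edges are joined by an edge. -/
def SimpleGraph.GapFree {V : Type*} (G : SimpleGraph V) : Prop :=
  ∀ a b c d : V, G.Adj a b → G.Adj c d → a ≠ c → a ≠ d → b ≠ c → b ≠ d →
    (G.Adj a c ∨ G.Adj a d ∨ G.Adj b c ∨ G.Adj b d)

/-- `G` is claw-free: it has no induced `K_{1,3}`. -/
def SimpleGraph.ClawFree {V : Type*} (G : SimpleGraph V) : Prop :=
  ∀ v a b c : V, G.Adj v a → G.Adj v b → G.Adj v c → a ≠ b → a ≠ c → b ≠ c →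
    (G.Adj a b ∨ G.Adj a c ∨ G.Adj b c)

/-- `G` is cricket-free: it has no induced cricket. -/
def SimpleGraph.CricketFree {V : Type*} (G : SimpleGraph V) : Prop :=
  ¬ ∃ w1 w2 w3 w4 w5 : V,
      w1 ≠ w2 ∧ w1 ≠ w3 ∧ w1 ≠ w4 ∧ w1 ≠ w5 ∧ w2 ≠ w3 ∧ w2 ≠ w4 ∧ w2 ≠ w5 ∧
      w3 ≠ w4 ∧ w3 ≠ w5 ∧ w4 ≠ w5 ∧
      G.Adj w1 w3 ∧ G.Adj w2 w3 ∧ G.Adj w3 w4 ∧ G.Adj w3 w5 ∧ G.Adj w4 w5 ∧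
      ¬ G.Adj w1 w2 ∧ ¬ G.Adj w1 w4 ∧ ¬ G.Adj w1 w5 ∧ ¬ G.Adj w2 w4 ∧ ¬ G.Adj w2 w5

/-- `w : Fin n → V` is an induced cycle of length `n` in `H`. -/
def SimpleGraph.IsInducedCycle {V : Type*} (H : SimpleGraph V) {n : ℕ} (w : Fin n → V) :
    Prop :=
  3 ≤ n ∧ Function.Injective w ∧
    ∀ i j : Fin n, H.Adj (w i) (w j) ↔
      ((j : ℕ) = ((i : ℕ) + 1) % n ∨ (i : ℕ) = ((j : ℕ) + 1) % n)

/-- A graph is chordal if it has no induced cycle of length at least four. -/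
def SimpleGraph.Chordal {V : Type*} (H : SimpleGraph V) : Prop :=
  ∀ (n : ℕ), 4 ≤ n → ∀ w : Fin n → V, ¬ H.IsInducedCycle w

/-! Monomial ideals, graded Betti numbers via the Taylor complex, and
Castelnuovo–Mumford regularity. -/

/-- The monomial ideal generated by the monomials with exponent vectors `gens`. -/
noncomputable def monomialSpan {V K : Type*} [CommRing K] {k : ℕ}
    (gens : Fin k → (V →₀ ℕ)) : Ideal (MvPolynomial V K) :=
  Ideal.span (Set.range fun i => monomial (gens i) (1 : K))

/-- The total degree of an exponent vector. -/
def monomialDegree {V : Type*} (m : V →₀ ℕ) : ℕ := m.sum fun _ n => n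

/-- `m` is a minimal monomial generator of the monomial ideal `I`. -/
def IsMinimalMonomialGen {V K : Type*} [CommRing K] (I : Ideal (MvPolynomial V K))
    (m : V →₀ ℕ) : Prop :=
  monomial m (1 : K) ∈ I ∧ ∀ m' : V →₀ ℕ, m' ≤ m → m' ≠ m → monomial m' (1 : K) ∉ I

/-- The lcm of the monomials `gens i`, `i ∈ T`. -/
noncomputable def taylorLcm {V : Type*} {k : ℕ} (gens : Fin k → (V →₀ ℕ))
    (T : Finset (Fin k)) : V →₀ ℕ :=
  T.sup gens

open Classical in
/-- The boundary of a basis element of the Taylor complex of `gens`, tensored with the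
residue field `K`: only the terms where the lcm is unchanged survive. -/
noncomputable def taylorBoundary {V K : Type*} [Field K] {k : ℕ}
    (gens : Fin k → (V →₀ ℕ)) (T : Finset (Fin k)) : Finset (Fin k) →₀ K :=
  ∑ t ∈ T, if taylorLcm gens (T.erase t) = taylorLcm gens T then
      ((-1 : K) ^ (T.filter fun s => s < t).card) • Finsupp.single (T.erase t) (1 : K)
    else 0

/-- The differential of the Taylor complex of `gens` tensored with `K`. -/
noncomputable def taylorDiff {V K : Type*} [Field K] {k : ℕ}
    (gens : Fin k → (V →₀ ℕ)) : (Finset (Fin k) →₀ K) →ₗ[K] (Finset (Fin k) →₀ K) :=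
  Finsupp.lsum K fun T =>
    LinearMap.toSpanSingleton K (Finset (Fin k) →₀ K) (taylorBoundary gens T)

/-- The graded piece of the Taylor complex in homological degree `i` and internal
degree `j`. -/
noncomputable def taylorPiece {V K : Type*} [Field K] {k : ℕ}
    (gens : Fin k → (V →₀ ℕ)) (i j : ℕ) : Submodule K (Finset (Fin k) →₀ K) :=
  Submodule.span K { f | ∃ T : Finset (Fin k), T.card = i ∧
    monomialDegree (taylorLcm gens T) = j ∧ f = Finsupp.single T (1 : K) }

/-- Nonvanishing of the degree-`j` part of the `i`-th homology of the Taylor complex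
of `gens` tensored with `K`; since the Taylor complex is a graded free resolution of
`S/I` (where `I` is the ideal generated by the monomials `gens`), this says exactly
that `Tor_i^S(S/I, K)_j ≠ 0`. -/
noncomputable def taylorHomologyNonzero {V K : Type*} [Field K] {k : ℕ}
    (gens : Fin k → (V →₀ ℕ)) (i j : ℕ) : Prop :=
  ¬ (LinearMap.ker (taylorDiff (K := K) gens) ⊓ taylorPiece (K := K) gens i j ≤
      Submodule.map (taylorDiff (K := K) gens) (taylorPiece (K := K) gens (i + 1) j))

/-- For a monomial ideal `I`, `Tor_i^S(I, K)_j ≠ 0`.  (Since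
`Tor_i^S(I,K) ≅ Tor_{i+1}^S(S/I,K)`, this is computed from the Taylor complex on any
family of monomial generators of `I`.) -/
def IdealTorNonzero {V K : Type*} [Field K] (I : Ideal (MvPolynomial V K))
    (i j : ℕ) : Prop :=
  ∃ (k : ℕ) (gens : Fin k → (V →₀ ℕ)), I = monomialSpan gens ∧
    taylorHomologyNonzero (K := K) gens (i + 1) j

/-- The Castelnuovo–Mumford regularity of a monomial ideal `I`:
`reg I = max { j - i : Tor_i^S(I, K)_j ≠ 0 }`. -/
noncomputable def reg {V K : Type*} [Field K] (I : Ideal (MvPolynomial V K)) : ℕ :=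
  sSup { d | ∃ i j : ℕ, IdealTorNonzero I i j ∧ d = j - i }

/-!
Four vertices `u, v, x, y` with `xy` an edge of `G` carry a path if and only if `u` and `v` are
joined to different ends of `xy`, or `uv` is an edge joined to `xy`; this describes `G'`. Its
complement has a perfect elimination order: first come the vertices adjacent to both `x` and `y`,
then those adjacent to exactly one of them, last all others, and within the second class a vertex
comes earlier when it has more neighbours far from `xy`. If `c` of the second class, adjacent to
`x` only, comes before `a` and `b` with `ab` an edge of `G'` but `ca` and `cb` are not, then up to
exchanging `a` and `b` either `c, y, x, a, b` is a cricket or `b` is a far neighbour of `a` and not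
of `c`, and a far neighbour of `c` that is not one of `a` leads to a gap.

A perfect elimination order makes `(G')ᶜ` chordal, and the lexicographic order of the edges of `G'`
gives its edge ideal linear quotients. Adding the generators one at a time presents the Taylor
complex as an iterated mapping cone, whose link terms are Taylor complexes of ideals generated by
variables (Koszul complexes), so the homology stays on the linear strand.
-/

section Supported

variable {σ R M : Type*} [CommRing R] [AddCommGroup M] [Module R M]

theorem eq_on_supported_of_single {f h : (σ →₀ R) →ₗ[R] M} {A : Set σ}
    (hA : ∀ a ∈ A, f (Finsupp.single a 1) = h (Finsupp.single a 1)) {z : σ →₀ R}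
    (hz : z ∈ Finsupp.supported R R A) : f z = h z := by
  rw [Finsupp.supported_eq_span_single] at hz
  exact LinearMap.eqOn_span (by rintro _ ⟨a, ha, rfl⟩; exact hA a ha) hz

theorem map_mem_of_single_mem {f : (σ →₀ R) →ₗ[R] M} {N : Submodule R M} {A : Set σ}
    (hA : ∀ a ∈ A, f (Finsupp.single a 1) ∈ N) {z : σ →₀ R}
    (hz : z ∈ Finsupp.supported R R A) : f z ∈ N := by
  rw [Finsupp.supported_eq_span_single] at hz
  have hle : Submodule.span R ((fun a => Finsupp.single a (1 : R)) '' A) ≤ N.comap f :=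
    Submodule.span_le.2 (by rintro _ ⟨a, ha, rfl⟩; exact hA a ha)
  exact hle hz

end Supported

section InsertSign

variable {ι R : Type*} [LinearOrder ι] [CommRing R]

/-- The sign `(-1) ^ k` with which a new index enters an alternating sum over `T`, where `k` is the
number of elements of `T` preceding it. -/
def insertSign (R : Type*) [CommRing R] (t : ι) (T : Finset ι) : R :=
  (-1) ^ (T.filter (· < t)).card

theorem insertSign_mul_self (t : ι) (T : Finset ι) :
    insertSign R t T * insertSign R t T = 1 := by
  rw [insertSign, ← mul_pow, neg_one_mul, neg_neg, one_pow]

theorem insertSign_insert_self (t : ι) (T : Finset ι) :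
    insertSign R t (insert t T) = insertSign R t T := by
  simp only [insertSign, Finset.filter_insert, lt_irrefl, if_false]

theorem insertSign_erase_self {t : ι} {T : Finset ι} (ht : t ∈ T) :
    insertSign R t (T.erase t) = insertSign R t T := by
  rw [← insertSign_insert_self, Finset.insert_erase ht]

theorem insertSign_insert_of_notMem {s : ι} {T : Finset ι} (hs : s ∉ T) (t : ι) :
    insertSign R t (insert s T) = (if s < t then -1 else 1) * insertSign R t T := by
  simp only [insertSign, Finset.filter_insert]
  split_ifs
  · rw [Finset.card_insert_of_notMem (by simp [hs]), pow_succ']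
  · rw [one_mul]

theorem insertSign_mul_insertSign_insert {s t : ι} {T : Finset ι} (hs : s ∈ T) (ht : t ∉ T) :
    insertSign R t T * insertSign R s (insert t T) =
      -(insertSign R s T * insertSign R t (T.erase s)) := by
  have ht_sign := insertSign_insert_of_notMem (R := R) (Finset.notMem_erase s T) t
  rw [Finset.insert_erase hs] at ht_sign
  rw [insertSign_insert_of_notMem ht, ht_sign]
  rcases lt_or_gt_of_ne (show s ≠ t from fun h => ht (h ▸ hs)) with h | h
  · rw [if_pos h, if_neg h.not_gt]; ring
  · rw [if_neg h.not_gt, if_pos h]; ring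

end InsertSign

section RelativeTaylorComplex

variable {ι L R : Type*} [SemilatticeSup L] [OrderBot L] [CommRing R]
variable {g : ι → L} {m : L} {S T : Finset ι} {s t : ι} {i : ℕ} {A : Set L}

/-- The join of `m` and of the labels `g t`, `t ∈ T`: the label of the face `T` in the Taylor
complex of `g` relative to the base `m`. -/
def relLcm (g : ι → L) (m : L) (T : Finset ι) : L :=
  m ⊔ T.sup g

theorem relLcm_empty : relLcm g m ∅ = m := by
  rw [relLcm, Finset.sup_empty, sup_bot_eq]

theorem relLcm_sup_base : relLcm g (m ⊔ g t) T = relLcm g m T ⊔ g t :=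
  sup_right_comm _ _ _

theorem relLcm_insert [DecidableEq ι] : relLcm g m (insert t T) = relLcm g (m ⊔ g t) T := by
  rw [relLcm, relLcm, Finset.sup_insert, sup_assoc]

theorem relLcm_eq_erase_sup [DecidableEq ι] (hs : s ∈ T) :
    relLcm g m T = relLcm g m (T.erase s) ⊔ g s := by
  rw [← relLcm_sup_base, ← relLcm_insert, Finset.insert_erase hs]

theorem relLcm_erase_eq_iff [DecidableEq ι] (hs : s ∈ T) :
    relLcm g m (T.erase s) = relLcm g m T ↔ g s ≤ relLcm g m (T.erase s) := by
  rw [relLcm_eq_erase_sup hs, eq_comm, sup_eq_left]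

theorem le_relLcm_and_le_relLcm_erase_iff [DecidableEq ι] (hs : s ∈ T) :
    g t ≤ relLcm g m T ∧ g s ≤ relLcm g m (T.erase s) ↔
      g s ≤ relLcm g (m ⊔ g t) (T.erase s) ∧ g t ≤ relLcm g m (T.erase s) := by
  rw [relLcm_eq_erase_sup hs, relLcm_sup_base]
  constructor
  · rintro ⟨ht, hs⟩
    exact ⟨le_sup_of_le_left hs, by rwa [sup_eq_left.2 hs] at ht⟩
  · rintro ⟨hs, ht⟩
    exact ⟨le_sup_of_le_left ht, by rwa [sup_eq_left.2 ht] at hs⟩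

/-- The faces `T ⊆ S` with `i` elements whose label relative to `m` lies in `A`. -/
def relFaces (g : ι → L) (m : L) (S : Finset ι) (i : ℕ) (A : Set L) : Set (Finset ι) :=
  {T | T ⊆ S ∧ T.card = i ∧ relLcm g m T ∈ A}

theorem relFaces_mono {S' : Finset ι} (h : S' ⊆ S) : relFaces g m S' i A ⊆ relFaces g m S i A :=
  fun _ hT => ⟨hT.1.trans h, hT.2⟩

open Classical in
/-- The comparison map from the Taylor complex relative to `m ⊔ g t` to the one relative to `m`:
it keeps the faces whose label is the same in both. -/
noncomputable def relTaylorComparison (R : Type*) [CommRing R] (g : ι → L) (m : L) (t : ι) :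
    (Finset ι →₀ R) →ₗ[R] (Finset ι →₀ R) :=
  Finsupp.linearCombination R fun T =>
    if g t ≤ relLcm g m T then Finsupp.single T 1 else 0

theorem relTaylorComparison_single_of_le (h : g t ≤ relLcm g m T) :
    relTaylorComparison R g m t (Finsupp.single T 1) = Finsupp.single T 1 := by
  rw [relTaylorComparison, Finsupp.linearCombination_single, one_smul, if_pos h]

theorem relTaylorComparison_single_of_not_le (h : ¬ g t ≤ relLcm g m T) :
    relTaylorComparison R g m t (Finsupp.single T 1) = 0 := by
  rw [relTaylorComparison, Finsupp.linearCombination_single, one_smul, if_neg h]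

theorem relTaylorComparison_mem_supported {B C : Set (Finset ι)} {z : Finset ι →₀ R}
    (hBC : ∀ T ∈ B, g t ≤ relLcm g m T → T ∈ C) (hz : z ∈ Finsupp.supported R R B) :
    relTaylorComparison R g m t z ∈ Finsupp.supported R R C := by
  refine map_mem_of_single_mem (fun T hT => ?_) hz
  by_cases h : g t ≤ relLcm g m T
  · rw [relTaylorComparison_single_of_le h]
    exact Finsupp.single_mem_supported R _ (hBC T hT h)
  · rw [relTaylorComparison_single_of_not_le h]
    exact Submodule.zero_mem _

theorem relTaylorComparison_of_le (ht : g t ≤ m) (z : Finset ι →₀ R) :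
    relTaylorComparison R g m t z = z :=
  eq_on_supported_of_single (f := relTaylorComparison R g m t) (h := LinearMap.id)
    (A := Set.univ) (fun _ _ => relTaylorComparison_single_of_le (ht.trans le_sup_left)) (by simp)

variable [LinearOrder ι]

open Classical in
/-- The differential of the Taylor complex of the labels `g` relative to the base `m`, with only
those terms kept that do not change the label (that is, after tensoring with the residue field).
For monomials this is the Taylor complex of the generators `lcm (m, g t) / m` of the colon ideal
`(I : m)`, with all degrees shifted by `m`. -/
noncomputable def relTaylorDiff (R : Type*) [CommRing R] (g : ι → L) (m : L) :
    (Finset ι →₀ R) →ₗ[R] (Finset ι →₀ R) :=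
  Finsupp.linearCombination R fun T => ∑ s ∈ T,
    if g s ≤ relLcm g m (T.erase s) then insertSign R s T • Finsupp.single (T.erase s) 1 else 0

/-- Signed insertion of the index `t` into every face. -/
noncomputable def insertMap (R : Type*) [CommRing R] (t : ι) :
    (Finset ι →₀ R) →ₗ[R] (Finset ι →₀ R) :=
  Finsupp.linearCombination R fun T => insertSign R t T • Finsupp.single (insert t T) 1

/-- Signed removal of the index `t` from the faces containing it; the other faces are sent
to `0`. -/
noncomputable def contractMap (R : Type*) [CommRing R] (t : ι) :
    (Finset ι →₀ R) →ₗ[R] (Finset ι →₀ R) :=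
  Finsupp.linearCombination R fun T =>
    if t ∈ T then insertSign R t T • Finsupp.single (T.erase t) 1 else 0

open Classical in
theorem relTaylorDiff_single :
    relTaylorDiff R g m (Finsupp.single T 1) = ∑ s ∈ T,
      if g s ≤ relLcm g m (T.erase s) then
        insertSign R s T • Finsupp.single (T.erase s) 1 else 0 := by
  rw [relTaylorDiff, Finsupp.linearCombination_single, one_smul]

theorem insertMap_single :
    insertMap R t (Finsupp.single T 1) = insertSign R t T • Finsupp.single (insert t T) 1 := by
  rw [insertMap, Finsupp.linearCombination_single, one_smul]

theorem contractMap_single_of_mem (ht : t ∈ T) :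
    contractMap R t (Finsupp.single T 1) = insertSign R t T • Finsupp.single (T.erase t) 1 := by
  rw [contractMap, Finsupp.linearCombination_single, one_smul, if_pos ht]

theorem contractMap_single_of_notMem (ht : t ∉ T) :
    contractMap R t (Finsupp.single T 1) = 0 := by
  rw [contractMap, Finsupp.linearCombination_single, one_smul, if_neg ht]

theorem insertMap_contractMap_single_of_mem (ht : t ∈ T) :
    insertMap R t (contractMap R t (Finsupp.single T 1)) = Finsupp.single T 1 := by
  rw [contractMap_single_of_mem ht, map_smul, insertMap_single, smul_smul,
    insertSign_erase_self ht, insertSign_mul_self, one_smul, Finset.insert_erase ht]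

theorem relTaylorDiff_mem_supported_notMem {z : Finset ι →₀ R}
    (hz : z ∈ Finsupp.supported R R {T | t ∉ T}) :
    relTaylorDiff R g m z ∈ Finsupp.supported R R {T | t ∉ T} := by
  classical
  refine map_mem_of_single_mem (fun T hT => ?_) hz
  rw [relTaylorDiff_single]
  refine Submodule.sum_mem _ fun s _ => ?_
  split_ifs
  · exact Submodule.smul_mem _ _
      (Finsupp.single_mem_supported R _ fun h => hT (Finset.mem_of_mem_erase h))
  · exact Submodule.zero_mem _

theorem contractMap_mem_supported_notMem (t : ι) (z : Finset ι →₀ R) :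
    contractMap R t z ∈ Finsupp.supported R R {T | t ∉ T} := by
  refine map_mem_of_single_mem (A := Set.univ) (fun T _ => ?_) (by simp)
  by_cases ht : t ∈ T
  · rw [contractMap_single_of_mem ht]
    exact Submodule.smul_mem _ _ (Finsupp.single_mem_supported R _ (Finset.notMem_erase t T))
  · rw [contractMap_single_of_notMem ht]
    exact Submodule.zero_mem _

theorem contractMap_eq_zero {z : Finset ι →₀ R} (hz : z ∈ Finsupp.supported R R {T | t ∉ T}) :
    contractMap R t z = 0 :=
  eq_on_supported_of_single (h := 0) (fun _ hT => contractMap_single_of_notMem hT) hz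

theorem contractMap_insertMap {z : Finset ι →₀ R}
    (hz : z ∈ Finsupp.supported R R {T | t ∉ T}) : contractMap R t (insertMap R t z) = z := by
  refine eq_on_supported_of_single (f := contractMap R t ∘ₗ insertMap R t) (h := LinearMap.id)
    (fun T (hT : t ∉ T) => ?_) hz
  rw [LinearMap.comp_apply, LinearMap.id_apply, insertMap_single, map_smul,
    contractMap_single_of_mem (Finset.mem_insert_self t T), smul_smul, insertSign_insert_self,
    insertSign_mul_self, one_smul, Finset.erase_insert hT]

theorem relTaylorDiff_insertMap_single (ht : t ∉ T) :
    relTaylorDiff R g m (insertMap R t (Finsupp.single T 1)) =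
      relTaylorComparison R g m t (Finsupp.single T 1) -
        insertMap R t (relTaylorDiff R g (m ⊔ g t) (Finsupp.single T 1)) := by
  classical
  rw [insertMap_single, map_smul, relTaylorDiff_single, relTaylorDiff_single,
    Finset.sum_insert ht, Finset.erase_insert ht, map_sum, smul_add, sub_eq_add_neg,
    Finset.smul_sum, ← Finset.sum_neg_distrib]
  congr 1
  · by_cases h : g t ≤ relLcm g m T
    · rw [if_pos h, relTaylorComparison_single_of_le h, smul_smul, insertSign_insert_self,
        insertSign_mul_self, one_smul]
    · rw [if_neg h, relTaylorComparison_single_of_not_le h, smul_zero]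
  · refine Finset.sum_congr rfl fun s hs => ?_
    rw [Finset.erase_insert_of_ne (ne_of_mem_of_not_mem hs ht).symm, relLcm_insert]
    split_ifs
    · rw [map_smul, insertMap_single, smul_smul, smul_smul,
        insertSign_mul_insertSign_insert hs ht, neg_smul]
    · rw [smul_zero, map_zero, neg_zero]

theorem relTaylorDiff_insertMap {z : Finset ι →₀ R}
    (hz : z ∈ Finsupp.supported R R {T | t ∉ T}) :
    relTaylorDiff R g m (insertMap R t z) =
      relTaylorComparison R g m t z - insertMap R t (relTaylorDiff R g (m ⊔ g t) z) :=
  eq_on_supported_of_single (f := relTaylorDiff R g m ∘ₗ insertMap R t)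
    (h := relTaylorComparison R g m t - insertMap R t ∘ₗ relTaylorDiff R g (m ⊔ g t))
    (fun _ hT => relTaylorDiff_insertMap_single hT) hz

theorem relTaylorDiff_relTaylorComparison (t : ι) (z : Finset ι →₀ R) :
    relTaylorDiff R g m (relTaylorComparison R g m t z) =
      relTaylorComparison R g m t (relTaylorDiff R g (m ⊔ g t) z) := by
  classical
  refine eq_on_supported_of_single (A := Set.univ)
    (f := relTaylorDiff R g m ∘ₗ relTaylorComparison R g m t)
    (h := relTaylorComparison R g m t ∘ₗ relTaylorDiff R g (m ⊔ g t)) (fun T _ => ?_) (by simp)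
  simp only [relTaylorDiff, relTaylorComparison, LinearMap.comp_apply,
    Finsupp.linearCombination_single, one_smul, apply_ite, map_zero, map_sum, map_smul, smul_zero]
  by_cases h : g t ≤ relLcm g m T
  · rw [if_pos h]
    refine Finset.sum_congr rfl fun s hs => ?_
    grind [le_relLcm_and_le_relLcm_erase_iff (g := g) (m := m) (t := t) hs]
  · rw [if_neg h, eq_comm]
    refine Finset.sum_eq_zero fun s hs => ?_
    grind [le_relLcm_and_le_relLcm_erase_iff (g := g) (m := m) (t := t) hs]

theorem sub_insertMap_contractMap_mem_supported {B : Set (Finset ι)} {z : Finset ι →₀ R} (t : ι)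
    (hz : z ∈ Finsupp.supported R R B) :
    z - insertMap R t (contractMap R t z) ∈ Finsupp.supported R R {T ∈ B | t ∉ T} := by
  refine map_mem_of_single_mem (f := LinearMap.id - insertMap R t ∘ₗ contractMap R t)
    (fun T hT => ?_) hz
  rw [LinearMap.sub_apply, LinearMap.comp_apply, LinearMap.id_apply]
  by_cases ht : t ∈ T
  · rw [insertMap_contractMap_single_of_mem ht, sub_self]
    exact Submodule.zero_mem _
  · rw [contractMap_single_of_notMem ht, map_zero, sub_zero]
    exact Finsupp.single_mem_supported R _ ⟨hT, ht⟩

theorem relTaylorDiff_contractMap {z : Finset ι →₀ R} (hz : relTaylorDiff R g m z = 0) (t : ι) :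
    relTaylorDiff R g (m ⊔ g t) (contractMap R t z) = 0 ∧
      relTaylorDiff R g m (z - insertMap R t (contractMap R t z)) =
        -relTaylorComparison R g m t (contractMap R t z) := by
  set b := contractMap R t z
  set a := z - insertMap R t b with ha_def
  have hb : b ∈ Finsupp.supported R R {T | t ∉ T} := contractMap_mem_supported_notMem t z
  have ha : a ∈ Finsupp.supported R R {T | t ∉ T} :=
    Finsupp.supported_mono (fun _ hT => hT.2)
      (sub_insertMap_contractMap_mem_supported (B := Set.univ) t (by simp))
  have hcone : relTaylorDiff R g m a + relTaylorComparison R g m t b =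
      insertMap R t (relTaylorDiff R g (m ⊔ g t) b) := by
    rw [ha_def, map_sub, hz, relTaylorDiff_insertMap hb]
    abel
  have hDb : relTaylorDiff R g (m ⊔ g t) b = 0 := by
    rw [← contractMap_insertMap (relTaylorDiff_mem_supported_notMem hb), ← hcone]
    exact contractMap_eq_zero (Submodule.add_mem _ (relTaylorDiff_mem_supported_notMem ha)
      (relTaylorComparison_mem_supported (fun _ hT _ => hT) hb))
  exact ⟨hDb, eq_neg_of_add_eq_zero_left (by rw [hcone, hDb, map_zero])⟩

/-- Vanishing of the `i`-th homology of the Taylor complex of `g` on `S` relative to `m`, in the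
degrees belonging to `A`. -/
def RelTaylorExact (R : Type*) [CommRing R] (g : ι → L) (m : L) (S : Finset ι) (i : ℕ)
    (A : Set L) : Prop :=
  ∀ z ∈ Finsupp.supported R R (relFaces g m S i A), relTaylorDiff R g m z = 0 →
    ∃ w ∈ Finsupp.supported R R (relFaces g m S (i + 1) A), relTaylorDiff R g m w = z

theorem supported_relFaces_erase_le :
    Finsupp.supported R R (relFaces g m (S.erase t) i A) ≤
      Finsupp.supported R R {T : Finset ι | t ∉ T} :=
  Finsupp.supported_mono fun _ hT h => Finset.notMem_erase t S (hT.1 h)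

theorem deletion_mem_supported {z : Finset ι →₀ R} (t : ι)
    (hz : z ∈ Finsupp.supported R R (relFaces g m S i A)) :
    z - insertMap R t (contractMap R t z) ∈
      Finsupp.supported R R (relFaces g m (S.erase t) i A) := by
  have hsub : {T ∈ relFaces g m S i A | t ∉ T} ⊆ relFaces g m (S.erase t) i A :=
    fun _ hT => ⟨Finset.subset_erase.2 ⟨hT.1.1, hT.2⟩, hT.1.2⟩
  exact Finsupp.supported_mono hsub (sub_insertMap_contractMap_mem_supported t hz)

theorem link_mem_supported {z : Finset ι →₀ R} (t : ι)
    (hz : z ∈ Finsupp.supported R R (relFaces g m S (i + 1) A)) :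
    contractMap R t z ∈ Finsupp.supported R R (relFaces g (m ⊔ g t) (S.erase t) i A) := by
  refine map_mem_of_single_mem (fun T hT => ?_) hz
  by_cases ht : t ∈ T
  · rw [contractMap_single_of_mem ht]
    refine Submodule.smul_mem _ _ (Finsupp.single_mem_supported R _
      ⟨Finset.erase_subset_erase t hT.1, ?_, ?_⟩)
    · rw [Finset.card_erase_of_mem ht, hT.2.1, Nat.add_sub_cancel]
    · rw [← relLcm_insert, Finset.insert_erase ht]
      exact hT.2.2
  · rw [contractMap_single_of_notMem ht]
    exact Submodule.zero_mem _

theorem insertMap_mem_supported (ht : t ∈ S) {w : Finset ι →₀ R}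
    (hw : w ∈ Finsupp.supported R R (relFaces g (m ⊔ g t) (S.erase t) i A)) :
    insertMap R t w ∈ Finsupp.supported R R (relFaces g m S (i + 1) A) := by
  refine map_mem_of_single_mem (fun T hT => ?_) hw
  rw [insertMap_single]
  refine Submodule.smul_mem _ _ (Finsupp.single_mem_supported R _
    ⟨Finset.insert_subset ht (hT.1.trans (Finset.erase_subset t S)), ?_, ?_⟩)
  · rw [Finset.card_insert_of_notMem fun h => Finset.notMem_erase t S (hT.1 h), hT.2.1]
  · rw [relLcm_insert]
    exact hT.2.2

namespace RelTaylorExact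

theorem of_relFaces_eq_empty (h : relFaces g m S i A = ∅) : RelTaylorExact R g m S i A := by
  intro z hz _
  rw [h, Finsupp.supported_empty, Submodule.mem_bot] at hz
  exact ⟨0, Submodule.zero_mem _, by rw [hz, map_zero]⟩

theorem of_base_notMem (h : m ∉ A) : RelTaylorExact R g m S 0 A := by
  refine of_relFaces_eq_empty (Set.eq_empty_of_forall_notMem fun T hT => h ?_)
  rw [← relLcm_empty (g := g) (m := m), ← Finset.card_eq_zero.1 hT.2.1]
  exact hT.2.2

theorem empty_succ : RelTaylorExact R g m ∅ (i + 1) A := by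
  refine of_relFaces_eq_empty (Set.eq_empty_of_forall_notMem fun T hT => ?_)
  have hcard : T.card = i + 1 := hT.2.1
  rw [Finset.subset_empty.1 hT.1, Finset.card_empty] at hcard
  exact (Nat.succ_ne_zero i).symm hcard

theorem zero_mono {S' : Finset ι} (hS : S' ⊆ S) (h : RelTaylorExact R g m S' 0 A) :
    RelTaylorExact R g m S 0 A := by
  have hle : relFaces g m S 0 A ⊆ relFaces g m S' 0 A := fun T hT =>
    ⟨by rw [Finset.card_eq_zero.1 hT.2.1]; exact Finset.empty_subset S', hT.2⟩
  intro z hz hDz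
  obtain ⟨w, hw, hDw⟩ := h z (Finsupp.supported_mono hle hz) hDz
  exact ⟨w, Finsupp.supported_mono (relFaces_mono hS) hw, hDw⟩

-- The long exact sequence of the mapping cone of `relTaylorComparison R g m t`, chased by hand.
theorem of_erase (ht : t ∈ S) (hdel : RelTaylorExact R g m (S.erase t) (i + 1) A)
    (hlink : RelTaylorExact R g (m ⊔ g t) (S.erase t) i A) :
    RelTaylorExact R g m S (i + 1) A := by
  intro z hz hDz
  obtain ⟨hDb, hDa⟩ := relTaylorDiff_contractMap hDz t
  obtain ⟨w, hw, hDw⟩ := hlink _ (link_mem_supported t hz) hDb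
  have hcomp : relTaylorComparison R g m t w ∈
      Finsupp.supported R R (relFaces g m (S.erase t) (i + 1) A) :=
    relTaylorComparison_mem_supported (fun T hT h => ⟨hT.1, hT.2.1, by
      rw [← sup_eq_left.2 h, ← relLcm_sup_base]
      exact hT.2.2⟩) hw
  obtain ⟨w', hw', hDw'⟩ := hdel _ (Submodule.add_mem _ (deletion_mem_supported t hz) hcomp) (by
    rw [map_add, hDa, relTaylorDiff_relTaylorComparison, hDw, neg_add_cancel])
  refine ⟨w' - insertMap R t w, Submodule.sub_mem _
    (Finsupp.supported_mono (relFaces_mono (Finset.erase_subset t S)) hw')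
    (insertMap_mem_supported ht hw), ?_⟩
  rw [map_sub, hDw', relTaylorDiff_insertMap (supported_relFaces_erase_le hw), hDw]
  abel

theorem of_le_base (ht : t ∈ S) (htm : g t ≤ m) : RelTaylorExact R g m S i A := by
  intro z hz hDz
  have hm : m ⊔ g t = m := sup_eq_left.2 htm
  obtain ⟨-, hDa⟩ := relTaylorDiff_contractMap hDz t
  have ha := deletion_mem_supported t hz
  refine ⟨insertMap R t (z - insertMap R t (contractMap R t z)),
    insertMap_mem_supported ht (by rwa [hm]), ?_⟩
  rw [relTaylorDiff_insertMap (supported_relFaces_erase_le ha), relTaylorComparison_of_le htm, hm,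
    hDa, relTaylorComparison_of_le htm, map_neg]
  abel

theorem union_of_dominated {U W : Finset ι} (hdom : ∀ w ∈ W, ∃ u ∈ U, g u ≤ m ⊔ g w)
    (hU : RelTaylorExact R g m U i A) : RelTaylorExact R g m (U ∪ W) i A := by
  induction W using Finset.induction_on with
  | empty => rwa [Finset.union_empty]
  | insert w W _ ih =>
    have hW := ih fun w' hw' => hdom w' (Finset.mem_insert_of_mem hw')
    by_cases hw : w ∈ U ∪ W
    · rwa [Finset.union_insert, Finset.insert_eq_of_mem hw]
    cases i with
    | zero => exact hW.zero_mono (Finset.union_subset_union_right (Finset.subset_insert w W))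
    | succ i =>
      obtain ⟨u, hu, hle⟩ := hdom w (Finset.mem_insert_self w W)
      have herase : (insert w (U ∪ W)).erase w = U ∪ W := Finset.erase_insert hw
      rw [Finset.union_insert]
      refine of_erase (Finset.mem_insert_self w _) (by rwa [herase]) ?_
      exact of_le_base (by rw [herase]; exact Finset.mem_union_left W hu) hle

end RelTaylorExact

end RelativeTaylorComplex

section LinearQuotients

variable {V ι α R : Type*} [LinearOrder ι] [CommRing R]
variable {g : ι → V →₀ ℕ} {m : V →₀ ℕ} {S : Finset ι} {i j d : ℕ}

theorem exists_sup_sup_eq_add_single {a b : V →₀ ℕ} {v : V} (hv : m ⊔ a = m + Finsupp.single v 1)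
    (hb : ∃ u, m ⊔ b = m + Finsupp.single u 1) (hne : ¬ b ≤ m ⊔ a) :
    ∃ u, m ⊔ a ⊔ b = m ⊔ a + Finsupp.single u 1 := by
  classical
  obtain ⟨u, hu⟩ := hb
  have huv : u ≠ v := by
    rintro rfl
    exact hne (hv ▸ hu ▸ le_sup_right)
  refine ⟨u, Finsupp.ext fun w => ?_⟩
  have hv_w := DFunLike.congr_fun hv w
  have hu_w := DFunLike.congr_fun hu w
  simp only [Finsupp.sup_apply, Finsupp.add_apply, Finsupp.single_apply] at hv_w hu_w ⊢
  grind

-- For distinct variables this is the acyclicity of the Koszul complex.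
theorem relTaylorExact_of_sup_eq_add_single
    (hS : ∀ s ∈ S, ∃ v, m ⊔ g s = m + Finsupp.single v 1) (hij : i + m.degree < j) :
    RelTaylorExact R g m S i {p | p.degree = j} := by
  induction S using Finset.induction_on generalizing m i with
  | empty =>
    cases i with
    | zero => exact .of_base_notMem fun h : m.degree = j => by omega
    | succ i => exact .empty_succ
  | insert t S ht ih =>
    cases i with
    | zero => exact .of_base_notMem fun h : m.degree = j => by omega
    | succ i =>
      have hS' : ∀ s ∈ S, ∃ v, m ⊔ g s = m + Finsupp.single v 1 :=
        fun s hs => hS s (Finset.mem_insert_of_mem hs)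
      refine .of_erase (Finset.mem_insert_self t S) ?_ ?_ <;> rw [Finset.erase_insert ht]
      · exact ih hS' hij
      · by_cases hdom : ∃ s ∈ S, g s ≤ m ⊔ g t
        · obtain ⟨s, hs, hle⟩ := hdom
          exact .of_le_base hs hle
        · obtain ⟨v, hv⟩ := hS t (Finset.mem_insert_self t S)
          refine ih (fun s hs => exists_sup_sup_eq_add_single hv (hS' s hs)
            fun h => hdom ⟨s, hs, h⟩) ?_
          rw [hv, map_add, Finsupp.degree_single]
          omega

variable [LinearOrder α] {f : ι → α}

/-- The monomials `g s`, `s ∈ S`, have linear quotients in the order of increasing `f`: the ideal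
generated by the predecessors of `g t` has a colon ideal by `g t` that is generated by variables.
Repeated monomials are allowed as long as they share the same value of `f`. -/
def HasLinearQuotients (g : ι → V →₀ ℕ) (f : ι → α) (S : Finset ι) : Prop :=
  (∀ s ∈ S, ∀ t ∈ S, f s = f t → g s = g t) ∧
    ∀ s ∈ S, ∀ t ∈ S, f s < f t → ∃ s' ∈ S, f s' < f t ∧
      ∃ v, g t ⊔ g s' = g t + Finsupp.single v 1 ∧ g t v < g s v

theorem add_single_le_sup {a b : V →₀ ℕ} {v : V} (h : a v < b v) :
    a + Finsupp.single v 1 ≤ a ⊔ b := by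
  classical
  intro w
  simp only [Finsupp.sup_apply, Finsupp.add_apply, Finsupp.single_apply]
  grind

namespace HasLinearQuotients

theorem of_insert_max {a : ι} (ha : a ∉ S) (hmax : ∀ s ∈ S, f s ≤ f a)
    (h : HasLinearQuotients g f (insert a S)) : HasLinearQuotients g f S := by
  refine ⟨fun s hs t ht => h.1 s (Finset.mem_insert_of_mem hs) t (Finset.mem_insert_of_mem ht),
    fun s hs t ht hlt => ?_⟩
  obtain ⟨s', hs', hs't, hv⟩ := h.2 s (Finset.mem_insert_of_mem hs) t
    (Finset.mem_insert_of_mem ht) hlt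
  have hne : s' ≠ a := by
    rintro rfl
    exact (hmax t ht).not_gt hs't
  exact ⟨s', (Finset.mem_insert.1 hs').resolve_left hne, hs't, hv⟩

theorem relTaylorExact_link {a : ι} (hmax : ∀ s ∈ S, f s ≤ f a)
    (h : HasLinearQuotients g f (insert a S)) (hij : i + (g a).degree < j) :
    RelTaylorExact R g (g a) S i {p | p.degree = j} := by
  classical
  have ha := Finset.mem_insert_self a S
  by_cases heq : ∃ s ∈ S, f s = f a
  · obtain ⟨s, hs, hsa⟩ := heq
    exact .of_le_base hs (h.1 s (Finset.mem_insert_of_mem hs) a ha hsa).le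
  set W := S.filter fun s => ∃ v, g a ⊔ g s = g a + Finsupp.single v 1
  have hW : RelTaylorExact R g (g a) W i {p | p.degree = j} :=
    relTaylorExact_of_sup_eq_add_single (fun s hs => (Finset.mem_filter.1 hs).2) hij
  rw [← Finset.union_eq_right.2 (Finset.filter_subset _ S : W ⊆ S)]
  refine hW.union_of_dominated fun s hs => ?_
  obtain ⟨s', hs', hlt, v, hv, hav⟩ := h.2 s (Finset.mem_insert_of_mem hs) a ha
    ((hmax s hs).lt_of_ne fun hsa => heq ⟨s, hs, hsa⟩)
  have hs'S : s' ∈ S := (Finset.mem_insert.1 hs').resolve_left (by rintro rfl; exact hlt.false)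
  exact ⟨s', Finset.mem_filter.2 ⟨hs'S, v, hv⟩,
    le_sup_right.trans (hv.le.trans (add_single_le_sup hav))⟩

theorem relTaylorExact (h : HasLinearQuotients g f S) (hdeg : ∀ s ∈ S, (g s).degree = d)
    (hij : i + d < j) : RelTaylorExact R g ⊥ S (i + 1) {p | p.degree = j} := by
  induction S using Finset.induction_on_max_value f with
  | empty => exact .empty_succ
  | insert a S ha hmax ih =>
    refine .of_erase (Finset.mem_insert_self a S) ?_ ?_ <;> rw [Finset.erase_insert ha]
    · exact ih (h.of_insert_max ha hmax) fun s hs => hdeg s (Finset.mem_insert_of_mem hs)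
    · rw [bot_sup_eq]
      exact h.relTaylorExact_link hmax (by rwa [hdeg a (Finset.mem_insert_self a S)])

end HasLinearQuotients

end LinearQuotients

section TaylorHomology

variable {V K : Type*} [Field K] {k : ℕ} {gens : Fin k → V →₀ ℕ} {i j : ℕ}

theorem relTaylorDiff_bot_eq_taylorDiff (gens : Fin k → V →₀ ℕ) :
    relTaylorDiff K gens ⊥ = taylorDiff gens := by
  refine Finsupp.lhom_ext' fun T => LinearMap.ext_ring ?_
  simp only [LinearMap.comp_apply, Finsupp.lsingle_apply, relTaylorDiff_single, taylorDiff,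
    Finsupp.lsum_single, LinearMap.toSpanSingleton_apply, one_smul, taylorBoundary]
  refine Finset.sum_congr rfl fun s hs => ?_
  have hiff := relLcm_erase_eq_iff (g := gens) (m := ⊥) hs
  simp only [relLcm, bot_sup_eq] at hiff ⊢
  simp only [taylorLcm, hiff, insertSign]

theorem taylorPiece_eq_supported_relFaces (gens : Fin k → V →₀ ℕ) (i j : ℕ) :
    taylorPiece (K := K) gens i j =
      Finsupp.supported K K (relFaces gens ⊥ Finset.univ i {p | p.degree = j}) := by
  rw [taylorPiece, Finsupp.supported_eq_span_single]
  congr 1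
  ext z
  simp only [relFaces, relLcm, bot_sup_eq, Set.mem_image, Set.mem_ofPred_eq, Finset.subset_univ,
    true_and, and_assoc, eq_comm (a := z)]
  rfl

theorem not_taylorHomologyNonzero
    (h : RelTaylorExact K gens ⊥ Finset.univ i {p | p.degree = j}) :
    ¬ taylorHomologyNonzero (K := K) gens i j := by
  rw [taylorHomologyNonzero, not_not, taylorPiece_eq_supported_relFaces,
    taylorPiece_eq_supported_relFaces, ← relTaylorDiff_bot_eq_taylorDiff]
  rintro z ⟨hDz, hz⟩
  exact h z hz hDz

end TaylorHomology

section EdgeIdeals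

variable {V K : Type*} {a b c d u v : V}

/-- The exponent vector of the monomial `x_u x_v`. -/
noncomputable def edgeExp (u v : V) : V →₀ ℕ :=
  Finsupp.single u 1 + Finsupp.single v 1

theorem edgeExp_comm (u v : V) : edgeExp u v = edgeExp v u :=
  add_comm _ _

theorem degree_edgeExp (u v : V) : (edgeExp u v).degree = 2 := by
  rw [edgeExp, map_add, Finsupp.degree_single, Finsupp.degree_single]

theorem edgeExp_eq_edgeExp_iff :
    edgeExp a b = edgeExp u v ↔ a = u ∧ b = v ∨ a = v ∧ b = u := by
  simp [edgeExp, Finsupp.single_add_single_eq_single_add_single]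

theorem eq_of_le_of_degree_eq {m n : V →₀ ℕ} (h : m ≤ n) (hdeg : m.degree = n.degree) :
    m = n := by
  obtain ⟨r, rfl⟩ := exists_add_of_le h
  rw [map_add, left_eq_add, Finsupp.degree_eq_zero_iff] at hdeg
  rw [hdeg, add_zero]

theorem eq_of_edgeExp_le_edgeExp (h : edgeExp a b ≤ edgeExp u v) : edgeExp a b = edgeExp u v :=
  eq_of_le_of_degree_eq h (by rw [degree_edgeExp, degree_edgeExp])

theorem edgeExp_sup_edgeExp (hdb : d ≠ b) :
    edgeExp a b ⊔ edgeExp a d = edgeExp a b + Finsupp.single d 1 := by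
  classical
  ext w
  simp only [edgeExp, Finsupp.sup_apply, Finsupp.add_apply, Finsupp.single_apply]
  grind

theorem edgeExp_apply_lt_edgeExp_apply (hda : d ≠ a) (hdb : d ≠ b) (u : V) :
    edgeExp a b d < edgeExp d u d := by
  classical
  simp only [edgeExp, Finsupp.add_apply, Finsupp.single_apply]
  grind

variable [CommRing K]

theorem X_mul_X_eq_monomial (u v : V) :
    (X u * X v : MvPolynomial V K) = monomial (edgeExp u v) 1 := by
  rw [X, X, monomial_mul, one_mul, edgeExp]

variable [Nontrivial K]

theorem monomial_mem_span_monomial {A : Set (V →₀ ℕ)} {m : V →₀ ℕ} :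
    monomial m (1 : K) ∈ Ideal.span ((fun n => monomial n (1 : K)) '' A) ↔ ∃ n ∈ A, n ≤ m := by
  classical
  rw [mem_ideal_span_monomial_image, support_monomial, if_neg one_ne_zero]
  simp only [Finset.mem_singleton, forall_eq]

theorem monomial_mem_monomialSpan {k : ℕ} {gens : Fin k → V →₀ ℕ} {m : V →₀ ℕ} :
    monomial m (1 : K) ∈ monomialSpan gens ↔ ∃ t, gens t ≤ m := by
  rw [monomialSpan, Set.range_comp' (fun n => monomial n (1 : K)), monomial_mem_span_monomial,
    Set.exists_range_iff]

theorem monomial_mem_edgeIdeal {H : SimpleGraph V} {m : V →₀ ℕ} :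
    monomial m (1 : K) ∈ edgeIdeal H ↔ ∃ u v, H.Adj u v ∧ edgeExp u v ≤ m := by
  have hgens : {p : MvPolynomial V K | ∃ u v, H.Adj u v ∧ p = X u * X v} =
      (fun n => monomial n (1 : K)) '' {n | ∃ u v, H.Adj u v ∧ n = edgeExp u v} := by
    ext p
    simp only [X_mul_X_eq_monomial, Set.mem_ofPred_eq, Set.mem_image]
    grind
  rw [edgeIdeal, hgens, monomial_mem_span_monomial]
  simp only [Set.mem_ofPred_eq]
  grind

theorem X_mul_X_mem_edgeIdeal {H : SimpleGraph V} :
    (X u * X v : MvPolynomial V K) ∈ edgeIdeal H ↔ H.Adj u v := by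
  rw [X_mul_X_eq_monomial, monomial_mem_edgeIdeal]
  refine ⟨?_, fun h => ⟨u, v, h, le_rfl⟩⟩
  rintro ⟨a, b, hab, hle⟩
  rcases edgeExp_eq_edgeExp_iff.1 (eq_of_edgeExp_le_edgeExp hle) with ⟨rfl, rfl⟩ | ⟨rfl, rfl⟩
  exacts [hab, hab.symm]

theorem exists_edgeExp_le_of_edgeIdeal_eq_monomialSpan {H : SimpleGraph V} {k : ℕ}
    {gens : Fin k → V →₀ ℕ} (hgens : edgeIdeal (K := K) H = monomialSpan gens) (t : Fin k) :
    ∃ u v, H.Adj u v ∧ edgeExp u v ≤ gens t := by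
  rw [← monomial_mem_edgeIdeal (K := K), hgens, monomial_mem_monomialSpan]
  exact ⟨t, le_rfl⟩

theorem exists_eq_edgeExp_of_edgeIdeal_eq_monomialSpan {H : SimpleGraph V} {k : ℕ}
    {gens : Fin k → V →₀ ℕ} (hgens : edgeIdeal (K := K) H = monomialSpan gens) (huv : H.Adj u v) :
    ∃ t, gens t = edgeExp u v := by
  have hmem := X_mul_X_mem_edgeIdeal (K := K).2 huv
  rw [X_mul_X_eq_monomial, hgens, monomial_mem_monomialSpan] at hmem
  obtain ⟨t, ht⟩ := hmem
  obtain ⟨a, b, -, hab⟩ := exists_edgeExp_le_of_edgeIdeal_eq_monomialSpan hgens t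
  exact ⟨t, le_antisymm ht (eq_of_edgeExp_le_edgeExp (hab.trans ht) ▸ hab)⟩

end EdgeIdeals

section PerfectElimination

variable {V : Type*} [LinearOrder V] {F H : SimpleGraph V}

/-- The linear order on the vertices is a perfect elimination order of `F`: the neighbours of a
vertex that come after it form a clique. -/
def IsPerfectElimination (F : SimpleGraph V) : Prop :=
  ∀ ⦃c a b : V⦄, c < a → c < b → a ≠ b → F.Adj c a → F.Adj c b → F.Adj a b

theorem isPerfectElimination_compl_iff : IsPerfectElimination Hᶜ ↔
    ∀ ⦃c a b : V⦄, c < a → c < b → H.Adj a b → H.Adj c a ∨ H.Adj c b := by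
  simp only [IsPerfectElimination, SimpleGraph.compl_adj]
  refine forall₃_congr fun c a b => ⟨fun h hca hcb hab => ?_, fun h hca hcb hne ha hb => ?_⟩
  · by_contra! hn
    exact (h hca hcb hab.ne ⟨hca.ne, hn.1⟩ ⟨hcb.ne, hn.2⟩).2 hab
  · exact ⟨hne, fun hab => (h hca hcb hab).elim ha.2 hb.2⟩

theorem exists_cyclic_neighbors {n : ℕ} (hn : 4 ≤ n) (c : Fin n) :
    ∃ p q : Fin n, p ≠ q ∧ (p : ℕ) = (c + 1) % n ∧ (c : ℕ) = (q + 1) % n ∧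
      (q : ℕ) ≠ (p + 1) % n ∧ (p : ℕ) ≠ (q + 1) % n := by
  have hsucc : ∀ i < n, (i + 1) % n = if i + 1 = n then 0 else i + 1 := by
    intro i hi
    split_ifs with h
    · rw [h, Nat.mod_self]
    · exact Nat.mod_eq_of_lt (by omega)
  have hc := c.isLt
  have hp : (if (c : ℕ) + 1 = n then 0 else (c : ℕ) + 1) < n := by split_ifs <;> omega
  have hq : (if (c : ℕ) = 0 then n - 1 else (c : ℕ) - 1) < n := by split_ifs <;> omega
  refine ⟨⟨_, hp⟩, ⟨_, hq⟩, ?_⟩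
  rw [ne_eq, Fin.mk.injEq, hsucc _ hc, hsucc _ hp, hsucc _ hq]
  dsimp only
  split_ifs <;> omega

-- The neighbours of the least vertex of an induced cycle would be adjacent.
theorem IsPerfectElimination.chordal (hF : IsPerfectElimination F) : F.Chordal := by
  rintro n hn w ⟨-, hinj, hadj⟩
  have : Nonempty (Fin n) := ⟨⟨0, by omega⟩⟩
  obtain ⟨c, hc⟩ := Finite.exists_min w
  obtain ⟨p, q, hpq, hcp, hqc, hqp, hpq'⟩ := exists_cyclic_neighbors hn c
  have hadj_cp : F.Adj (w c) (w p) := (hadj c p).2 (Or.inl hcp)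
  have hadj_cq : F.Adj (w c) (w q) := (hadj c q).2 (Or.inr hqc)
  have hadj_pq : F.Adj (w p) (w q) := hF ((hc p).lt_of_ne hadj_cp.ne)
    ((hc q).lt_of_ne hadj_cq.ne) (hinj.ne hpq) hadj_cp hadj_cq
  exact ((hadj p q).1 hadj_pq).elim hqp hpq'

theorem IsPerfectElimination.hasLinearQuotients {ι : Type*} {g : ι → V →₀ ℕ} {S : Finset ι}
    {a b : ι → V} (hH : IsPerfectElimination Hᶜ)
    (hS : ∀ t ∈ S, a t < b t ∧ H.Adj (a t) (b t) ∧ g t = edgeExp (a t) (b t))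
    (hall : ∀ u v, u < v → H.Adj u v → ∃ t ∈ S, a t = u ∧ b t = v) :
    HasLinearQuotients g (fun t => toLex (a t, b t)) S := by
  rw [isPerfectElimination_compl_iff] at hH
  constructor
  · intro s hs t ht hst
    have hab : a s = a t ∧ b s = b t := Prod.mk.inj (toLex.injective hst)
    rw [(hS s hs).2.2, (hS t ht).2.2, hab.1, hab.2]
  intro s hs t ht hlt
  obtain ⟨hs_lt, -, hgs⟩ := hS s hs
  obtain ⟨ht_lt, hadj, hgt⟩ := hS t ht
  rw [hgs, hgt]
  have hlex : a s < a t ∨ a s = a t ∧ b s < b t := Prod.Lex.toLex_lt_toLex.1 hlt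
  rcases hlex with hst | ⟨hst, hbst⟩
  · have hvar := edgeExp_apply_lt_edgeExp_apply hst.ne (hst.trans ht_lt).ne (b s)
    rcases hH hst (hst.trans ht_lt) hadj with h | h
    · obtain ⟨s', hs', ha, hb⟩ := hall _ _ hst h
      refine ⟨s', hs', Prod.Lex.toLex_lt_toLex.2 (Or.inl (ha ▸ hst)), a s, ?_, hvar⟩
      rw [(hS s' hs').2.2, ha, hb, edgeExp_comm (a s),
        edgeExp_sup_edgeExp (hst.trans ht_lt).ne]
    · obtain ⟨s', hs', ha, hb⟩ := hall _ _ (hst.trans ht_lt) h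
      refine ⟨s', hs', Prod.Lex.toLex_lt_toLex.2 (Or.inl (ha ▸ hst)), a s, ?_, hvar⟩
      rw [(hS s' hs').2.2, ha, hb, edgeExp_comm (a s), edgeExp_comm (a t),
        edgeExp_sup_edgeExp hst.ne]
  · refine ⟨s, hs, hlt, b s, ?_, ?_⟩
    · rw [hgs, hst, edgeExp_sup_edgeExp hbst.ne]
    · rw [edgeExp_comm (a s)]
      exact edgeExp_apply_lt_edgeExp_apply (hst ▸ hs_lt).ne' hbst.ne _

theorem exists_ordered_edge {m : V →₀ ℕ} (h : ∃ u v, H.Adj u v ∧ edgeExp u v ≤ m) :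
    ∃ u v, u < v ∧ H.Adj u v ∧ edgeExp u v ≤ m := by
  obtain ⟨u, v, huv, hle⟩ := h
  rcases lt_or_gt_of_ne huv.ne with hlt | hlt
  · exact ⟨u, v, hlt, huv, hle⟩
  · exact ⟨v, u, hlt, huv.symm, edgeExp_comm u v ▸ hle⟩

theorem IsPerfectElimination.relTaylorExact_of_edgeIdeal_eq {K : Type*} [CommRing K] [Nontrivial K]
    {k : ℕ} {gens : Fin k → V →₀ ℕ} {i j : ℕ} (hH : IsPerfectElimination Hᶜ)
    (hgens : edgeIdeal (K := K) H = monomialSpan gens) (hij : i + 2 < j) :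
    RelTaylorExact K gens ⊥ Finset.univ (i + 1) {p | p.degree = j} := by
  classical
  choose a b hlt hadj hle using fun t =>
    exists_ordered_edge (exists_edgeExp_le_of_edgeIdeal_eq_monomialSpan hgens t)
  set S : Finset (Fin k) := Finset.univ.filter fun t => gens t = edgeExp (a t) (b t)
  have hall : ∀ u v, u < v → H.Adj u v → ∃ t ∈ S, a t = u ∧ b t = v := by
    intro u v huv_lt huv
    obtain ⟨t, ht⟩ := exists_eq_edgeExp_of_edgeIdeal_eq_monomialSpan hgens huv
    have heq : edgeExp (a t) (b t) = edgeExp u v := eq_of_edgeExp_le_edgeExp (ht ▸ hle t)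
    refine ⟨t, Finset.mem_filter.2 ⟨Finset.mem_univ t, ht.trans heq.symm⟩,
      (edgeExp_eq_edgeExp_iff.1 heq).resolve_right ?_⟩
    rintro ⟨hav, hbu⟩
    exact huv_lt.not_gt (hav ▸ hbu ▸ hlt t)
  have hS : ∀ t ∈ S, gens t = edgeExp (a t) (b t) := fun t ht => (Finset.mem_filter.1 ht).2
  have hlin : HasLinearQuotients gens (fun t => toLex (a t, b t)) S :=
    hH.hasLinearQuotients (fun t ht => ⟨hlt t, hadj t, hS t ht⟩) hall
  have hexact := hlin.relTaylorExact (R := K) (fun t ht => by rw [hS t ht, degree_edgeExp]) hij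
  rw [← Finset.union_eq_right.2 (Finset.subset_univ S)]
  refine hexact.union_of_dominated fun w _ => ?_
  obtain ⟨t, ht, hat, hbt⟩ := hall _ _ (hlt w) (hadj w)
  exact ⟨t, ht, by rw [hS t ht, hat, hbt, bot_sup_eq]; exact hle w⟩

theorem IsPerfectElimination.reg_edgeIdeal_le {K : Type*} [Field K]
    (hH : IsPerfectElimination Hᶜ) : reg (edgeIdeal (K := K) H) ≤ 2 := by
  refine csSup_le' ?_
  rintro _ ⟨i, j, ⟨k, gens, hgens, htor⟩, rfl⟩
  by_contra hlt
  exact not_taylorHomologyNonzero (hH.relTaylorExact_of_edgeIdeal_eq hgens (by omega)) htor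

end PerfectElimination

section LinearExtension

theorem exists_linearOrder_lt_imp_not_lt {α β : Type*} [PartialOrder β] (f : α → β) :
    ∃ _ : LinearOrder α, ∀ ⦃a b : α⦄, a < b → ¬ f b < f a := by
  classical
  let : LinearOrder α := linearOrderOfSTO WellOrderingRel
  let g : α → LinearExtension β ×ₗ α := fun a => toLex (toLinearExtension (f a), a)
  have hg : Function.Injective g := fun a b h => (Prod.mk.inj (toLex.injective h)).2
  refine ⟨LinearOrder.lift' g hg, fun a b hab hlt => ?_⟩
  have hle : toLinearExtension (f b) ≤ toLinearExtension (f a) := toLinearExtension.monotone hlt.le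
  rcases Prod.Lex.toLex_lt_toLex.1 (show g a < g b from hab) with h | ⟨h, -⟩
  · exact h.not_ge hle
  · exact hlt.ne' h

end LinearExtension

section ColonIdeal

variable {V K : Type*} {G : SimpleGraph V} {u v x y : V}

theorem isPathList_four_iff {a b c d : V} :
    G.IsPathList [a, b, c, d] ↔
      G.Adj a b ∧ G.Adj b c ∧ G.Adj c d ∧ [a, b, c, d].Nodup := by
  change List.IsChain G.Adj _ ∧ _ ↔ _
  simp only [List.isChain_cons_cons, List.IsChain.singleton, and_true, and_assoc]

theorem prod_map_X_eq_monomial [CommRing K] [DecidableEq V] (l : List V) :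
    ((l.map X).prod : MvPolynomial V K) = monomial (Multiset.toFinsupp (l : Multiset V)) 1 := by
  induction l with
  | nil => simp
  | cons a l ih =>
    rw [List.map_cons, List.prod_cons, ih, ← Multiset.cons_coe, ← Multiset.singleton_add,
      Multiset.toFinsupp_add, Multiset.toFinsupp_singleton, X, monomial_mul, one_mul]

theorem prod_map_X_mem_pathIdeal [CommRing K] [Nontrivial K] (l : List V) :
    ((l.map X).prod : MvPolynomial V K) ∈ pathIdeal G l.length ↔
      ∃ l', G.IsPathList l' ∧ l'.Perm l := by
  classical
  have hgens : {p : MvPolynomial V K | ∃ l' : List V, G.IsPathList l' ∧ l'.length = l.length ∧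
      p = (l'.map X).prod} = (fun n => monomial n (1 : K)) ''
        {n | ∃ l' : List V, G.IsPathList l' ∧ l'.length = l.length ∧
          n = Multiset.toFinsupp (l' : Multiset V)} := by
    ext p
    simp only [prod_map_X_eq_monomial, Set.mem_ofPred_eq, Set.mem_image]
    grind
  rw [pathIdeal, hgens, prod_map_X_eq_monomial, monomial_mem_span_monomial]
  constructor
  · rintro ⟨_, ⟨l', hpath, hlen, rfl⟩, hle⟩
    have hle' : (l' : Multiset V) ≤ l := Finsupp.orderIsoMultiset.symm.le_iff_le.1 hle
    exact ⟨l', hpath, Multiset.coe_eq_coe.1 (Multiset.eq_of_le_of_card_le hle' hlen.ge)⟩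
  · rintro ⟨l', hpath, hperm⟩
    exact ⟨_, ⟨l', hpath, hperm.length_eq, rfl⟩, by rw [Multiset.coe_eq_coe.2 hperm]⟩

/-- The graph whose edge ideal is `(I_4(G) : x_x x_y)` for an edge `xy` of `G`. The condition on
`uv` says that `u`, `v`, `x`, `y` are, in some order, the vertices of a path of `G`. -/
def colonGraph (G : SimpleGraph V) (x y : V) : SimpleGraph V where
  Adj u v := u ≠ v ∧ u ≠ x ∧ u ≠ y ∧ v ≠ x ∧ v ≠ y ∧
    (G.Adj u x ∧ G.Adj v y ∨ G.Adj u y ∧ G.Adj v x ∨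
      G.Adj u v ∧ (G.Adj u x ∨ G.Adj u y ∨ G.Adj v x ∨ G.Adj v y))
  symm := ⟨fun u v => by grind [G.adj_comm u v]⟩
  loopless := ⟨fun _ h => h.1 rfl⟩

theorem colonGraph_comm (G : SimpleGraph V) (x y : V) : colonGraph G x y = colonGraph G y x := by
  ext u v
  simp only [colonGraph]
  tauto

theorem exists_isPathList_perm_iff (he : G.Adj x y) :
    (∃ l, G.IsPathList l ∧ l.Perm [u, v, x, y]) ↔ (colonGraph G x y).Adj u v := by
  have hxy := he.ne
  simp only [colonGraph]
  constructor
  · rintro ⟨l, hl, hperm⟩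
    obtain ⟨a, b, c, d, rfl⟩ := List.length_eq_four.1 hperm.length_eq
    obtain ⟨hab, hbc, hcd, hnd⟩ := isPathList_four_iff.1 hl
    have hnd' := hperm.nodup_iff.1 hnd
    have hmem : ∀ w ∈ [a, b, c, d], w ∈ [u, v, x, y] := fun w => hperm.mem_iff.1
    simp only [List.mem_cons, List.not_mem_nil, or_false, forall_eq_or_imp, forall_eq] at hmem
    simp only [List.nodup_cons, List.mem_cons, List.not_mem_nil, or_false] at hnd hnd'
    grind [G.adj_comm]
  · rintro ⟨huv, hux, huy, hvx, hvy, h⟩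
    have hnd : [u, v, x, y].Nodup := by simp [huv, hux, huy, hvx, hvy, hxy]
    have of_path : ∀ {a b c d}, G.Adj a b → G.Adj b c → G.Adj c d →
        [a, b, c, d].Perm [u, v, x, y] → ∃ l, G.IsPathList l ∧ l.Perm [u, v, x, y] :=
      fun hab hbc hcd hperm =>
        ⟨_, isPathList_four_iff.2 ⟨hab, hbc, hcd, hperm.nodup_iff.2 hnd⟩, hperm⟩
    classical
    rcases h with ⟨hu, hv⟩ | ⟨hu, hv⟩ | ⟨huv, hu | hu | hv | hv⟩
    · exact of_path hu he hv.symm (by grind)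
    · exact of_path hu he.symm hv.symm (by grind)
    · exact of_path huv.symm hu he (by grind)
    · exact of_path huv.symm hu he.symm (by grind)
    · exact of_path huv hv he (by grind)
    · exact of_path huv hv he.symm (by grind)

theorem eq_colonGraph_of_edgeIdeal_eq_colon [CommRing K] [Nontrivial K] {G' : SimpleGraph V}
    (he : G.Adj x y)
    (hG' : edgeIdeal (K := K) G' = Submodule.colon (pathIdeal (K := K) G 4)
      (Ideal.span {X x * X y} : Ideal (MvPolynomial V K))) :
    G' = colonGraph G x y := by
  ext u v
  have hprod : (X u * X v * (X x * X y) : MvPolynomial V K) = ([u, v, x, y].map X).prod := by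
    simp [mul_assoc]
  rw [← X_mul_X_mem_edgeIdeal (K := K), hG', Ideal.mem_colon_span_singleton, hprod,
    ← exists_isPathList_perm_iff he]
  exact prod_map_X_mem_pathIdeal [u, v, x, y]

end ColonIdeal

section Elimination

variable {V : Type*} {G : SimpleGraph V} {x y a b c v : V}

/-- The neighbours of `v` that are adjacent to neither end of the edge `xy`. -/
def farNeighbors (G : SimpleGraph V) (x y v : V) : Set V :=
  {z | G.Adj v z ∧ ¬ G.Adj z x ∧ ¬ G.Adj z y}

theorem farNeighbors_comm (G : SimpleGraph V) (x y v : V) :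
    farNeighbors G x y v = farNeighbors G y x v := by
  simp only [farNeighbors, and_comm (a := ¬ G.Adj _ x)]

theorem adj_or_adj_of_not_ssubset (hgap : G.GapFree) (hcricket : G.CricketFree) (he : G.Adj x y)
    (hcy : c ≠ y) (hay : a ≠ y) (hca : c ≠ a) (hcx : G.Adj c x) (hncy : ¬ G.Adj c y)
    (hax : G.Adj a x) (hnay : ¬ G.Adj a y) (hnby : ¬ G.Adj b y) (hab : G.Adj a b)
    (hN : ¬ farNeighbors G x y c ⊂ farNeighbors G x y a) :
    G.Adj c a ∨ G.Adj c b := by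
  by_contra! hn
  have hcb : c ≠ b := by rintro rfl; exact hn.1 hab.symm
  have hbx : b ≠ x := by rintro rfl; exact hn.2 hcx
  have hby : b ≠ y := by rintro rfl; exact hnay hab
  by_cases hbx_adj : G.Adj b x
  · exact hcricket ⟨c, y, x, a, b, hcy, hcx.ne, hca, hcb, he.ne', hay.symm, hby.symm, hax.ne',
      hbx.symm, hab.ne, hcx, he.symm, hax.symm, hbx_adj.symm, hab, hncy, hn.1, hn.2,
      fun h => hnay h.symm, fun h => hnby h.symm⟩
  · have hb_mem : b ∈ farNeighbors G x y a := ⟨hab, hbx_adj, hnby⟩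
    have hb_notMem : b ∉ farNeighbors G x y c := fun h => hn.2 h.1
    obtain ⟨z, ⟨hcz, hnzx, hnzy⟩, hz⟩ := Set.not_subset.1 fun hsub =>
      hN ⟨hsub, fun h => hb_notMem (h hb_mem)⟩
    have hnaz : ¬ G.Adj a z := fun h => hz ⟨h, hnzx, hnzy⟩
    have hzx : z ≠ x := by rintro rfl; exact hnaz hax
    have hzy : z ≠ y := by rintro rfl; exact hncy hcz
    have hza : z ≠ a := by rintro rfl; exact hn.1 hcz
    have hzb : z ≠ b := by rintro rfl; exact hn.2 hcz
    have hzb_adj : G.Adj z b := by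
      have := hgap c z a b hcz hab hca hcb hza hzb
      grind [G.adj_comm]
    have := hgap z b x y hzb_adj he hzx hzy hbx hby
    grind

theorem colonGraph_adj_or_adj_of_not_ssubset (hgap : G.GapFree) (hcricket : G.CricketFree)
    (he : G.Adj x y) (hcy : c ≠ y) (hcx : G.Adj c x) (hncy : ¬ G.Adj c y)
    (hca : c ≠ a) (hcb : c ≠ b) (hab : (colonGraph G x y).Adj a b)
    (hNa : G.Adj a x → ¬ G.Adj a y → ¬ farNeighbors G x y c ⊂ farNeighbors G x y a)
    (hNb : G.Adj b x → ¬ G.Adj b y → ¬ farNeighbors G x y c ⊂ farNeighbors G x y b) :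
    (colonGraph G x y).Adj c a ∨ (colonGraph G x y).Adj c b := by
  have hcx' := hcx.ne
  obtain ⟨-, hax, hay, hbx, hby, h⟩ := hab
  simp only [colonGraph]
  by_cases hay_adj : G.Adj a y
  · grind
  by_cases hby_adj : G.Adj b y
  · grind
  obtain ⟨hab, hx⟩ : G.Adj a b ∧ (G.Adj a x ∨ G.Adj b x) := by grind
  have key : G.Adj c a ∨ G.Adj c b := by
    rcases hx with hax | hbx
    · exact adj_or_adj_of_not_ssubset hgap hcricket he hcy hay hca hcx hncy hax hay_adj hby_adj hab
        (hNa hax hay_adj)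
    · exact (adj_or_adj_of_not_ssubset hgap hcricket he hcy hby hcb hcx hncy hbx hby_adj hay_adj
        hab.symm (hNb hbx hby_adj)).symm
  grind

open Classical in
/-- The number of ends of the edge `xy` not adjacent to `v`, for vertices `v` off the edge; the
ends `x` and `y` themselves, isolated in `colonGraph G x y`, get the largest value. -/
noncomputable def elimRank (G : SimpleGraph V) (x y v : V) : ℕ :=
  if G.Adj v x ∧ G.Adj v y then 0
  else if v ≠ x ∧ v ≠ y ∧ (G.Adj v x ∨ G.Adj v y) then 1
  else 2

/-- The key by which vertices are eliminated from the complement of `colonGraph G x y`: first by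
`elimRank`, then vertices with more far neighbours first. -/
noncomputable def elimKey (G : SimpleGraph V) (x y v : V) : ℕ ×ₗ (Set V)ᵒᵈ :=
  toLex (elimRank G x y v, OrderDual.toDual (farNeighbors G x y v))

theorem elimKey_lt_elimKey_iff : elimKey G x y a < elimKey G x y c ↔
    elimRank G x y a < elimRank G x y c ∨
      elimRank G x y a = elimRank G x y c ∧ farNeighbors G x y c ⊂ farNeighbors G x y a :=
  Prod.Lex.toLex_lt_toLex

theorem elimRank_comm (G : SimpleGraph V) (x y v : V) : elimRank G x y v = elimRank G y x v := by
  simp only [elimRank]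
  grind

theorem elimKey_comm (G : SimpleGraph V) (x y v : V) : elimKey G x y v = elimKey G y x v := by
  rw [elimKey, elimKey, elimRank_comm, farNeighbors_comm]

theorem colonGraph_adj_or_adj_of_adj_left (hgap : G.GapFree) (hcricket : G.CricketFree)
    (he : G.Adj x y) (hcy : c ≠ y) (hcx : G.Adj c x) (hncy : ¬ G.Adj c y)
    (hca : c ≠ a) (hcb : c ≠ b) (ha : ¬ elimKey G x y a < elimKey G x y c)
    (hb : ¬ elimKey G x y b < elimKey G x y c) (hab : (colonGraph G x y).Adj a b) :
    (colonGraph G x y).Adj c a ∨ (colonGraph G x y).Adj c b := by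
  have ⟨_, _, hay, _, hby, _⟩ := hab
  have rank_one : ∀ v, v ≠ y → G.Adj v x → ¬ G.Adj v y → elimRank G x y v = 1 := by
    intro v hvy hvx hnvy
    rw [elimRank, if_neg (fun h => hnvy h.2), if_pos ⟨hvx.ne, hvy, Or.inl hvx⟩]
  have not_ssubset : ∀ v, v ≠ y → ¬ elimKey G x y v < elimKey G x y c → G.Adj v x → ¬ G.Adj v y →
      ¬ farNeighbors G x y c ⊂ farNeighbors G x y v := fun v hvy hv hvx hnvy hlt =>
    hv (elimKey_lt_elimKey_iff.2 (Or.inr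
      ⟨by rw [rank_one v hvy hvx hnvy, rank_one c hcy hcx hncy], hlt⟩))
  exact colonGraph_adj_or_adj_of_not_ssubset hgap hcricket he hcy hcx hncy hca hcb hab
    (not_ssubset a hay ha) (not_ssubset b hby hb)

theorem colonGraph_adj_or_adj_of_not_elimKey_lt (hgap : G.GapFree) (hcricket : G.CricketFree)
    (he : G.Adj x y) (hca : c ≠ a) (hcb : c ≠ b) (ha : ¬ elimKey G x y a < elimKey G x y c)
    (hb : ¬ elimKey G x y b < elimKey G x y c) (hab : (colonGraph G x y).Adj a b) :
    (colonGraph G x y).Adj c a ∨ (colonGraph G x y).Adj c b := by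
  by_cases hboth : G.Adj c x ∧ G.Adj c y
  · have := hboth.1.ne
    have := hboth.2.ne
    simp only [colonGraph] at hab ⊢
    grind
  by_cases hone : c ≠ x ∧ c ≠ y ∧ (G.Adj c x ∨ G.Adj c y)
  · obtain ⟨hcx, hcy, h | h⟩ := hone
    · exact colonGraph_adj_or_adj_of_adj_left hgap hcricket he hcy h (fun h' => hboth ⟨h, h'⟩)
        hca hcb ha hb hab
    · simp only [elimKey_comm G x y, colonGraph_comm G x y] at ha hb hab ⊢
      exact colonGraph_adj_or_adj_of_adj_left hgap hcricket he.symm hcx h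
        (fun h' => hboth ⟨h', h⟩) hca hcb ha hb hab
  · have hc : elimRank G x y c = 2 := by rw [elimRank, if_neg hboth, if_neg hone]
    have hrank_a : ¬ elimRank G x y a < 2 := fun h =>
      ha (elimKey_lt_elimKey_iff.2 (Or.inl (hc ▸ h)))
    have hrank_b : ¬ elimRank G x y b < 2 := fun h =>
      hb (elimKey_lt_elimKey_iff.2 (Or.inl (hc ▸ h)))
    simp only [elimRank, colonGraph] at hrank_a hrank_b hab
    grind

theorem exists_isPerfectElimination_compl_colonGraph (hgap : G.GapFree)
    (hcricket : G.CricketFree) (he : G.Adj x y) :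
    ∃ _ : LinearOrder V, IsPerfectElimination (colonGraph G x y)ᶜ := by
  obtain ⟨order, horder⟩ := exists_linearOrder_lt_imp_not_lt (elimKey G x y)
  exact ⟨order, isPerfectElimination_compl_iff.2 fun c a b hca hcb =>
    colonGraph_adj_or_adj_of_not_elimKey_lt hgap hcricket he hca.ne hcb.ne (horder hca)
      (horder hcb)⟩

end Elimination

-- The junk value of `reg` at an ideal without a finite family of monomial generators is `0`.
theorem stmt10_general {V K : Type*} [Field K] (G : SimpleGraph V)
    (hgap : G.GapFree) (hcricket : G.CricketFree)
    (x y : V) (he : G.Adj x y) (G' : SimpleGraph V)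
    (hG' : edgeIdeal (K := K) G' =
      Submodule.colon (pathIdeal (K := K) G 4)
        (Ideal.span {X x * X y} : Ideal (MvPolynomial V K))) :
    (G'ᶜ).Chordal ∧
      ((Submodule.colon (pathIdeal (K := K) G 4)
          (Ideal.span {X x * X y} : Ideal (MvPolynomial V K))).FG →
        reg (Submodule.colon (pathIdeal (K := K) G 4)
          (Ideal.span {X x * X y} : Ideal (MvPolynomial V K))) ≤ 2) := by
  obtain ⟨_, helim⟩ := exists_isPerfectElimination_compl_colonGraph hgap hcricket he
  rw [← eq_colonGraph_of_edgeIdeal_eq_colon he hG'] at helim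
  exact ⟨helim.chordal, fun _ => hG' ▸ helim.reg_edgeIdeal_le⟩

/-- If `G` is gap-free and cricket-free with `I_4(G) ≠ 0`, `e = xy` is an
edge of `G`, and `G'` is the simple graph whose edge ideal is `(I_4(G) : x_x x_y)`,
then `(G')ᶜ` is chordal; equivalently, `reg (I_4(G) : x_x x_y) ≤ 2`. -/
theorem stmt10 {V K : Type*} [Fintype V] [Field K] (G : SimpleGraph V)
    (hgap : G.GapFree) (hcricket : G.CricketFree)
    (h4 : pathIdeal (K := K) G 4 ≠ ⊥)
    (x y : V) (he : G.Adj x y) (G' : SimpleGraph V)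
    (hG' : edgeIdeal (K := K) G' =
      Submodule.colon (pathIdeal (K := K) G 4) (Ideal.span {X x * X y} : Ideal (MvPolynomial V K))) :
    (G'ᶜ).Chordal ∧
      reg (Submodule.colon (pathIdeal (K := K) G 4) (Ideal.span {X x * X y} : Ideal (MvPolynomial V K))) ≤ 2 :=
  (stmt10_general G hgap hcricket x y he G' hG').imp_right (· (IsNoetherian.noetherian _))
end

section
/- Let G be a finite simple claw-free graph, let x_1 x_2 ⋯ x_t be a path on t distinct vertices of G (t ≥ 3), and let a be a vertex of G not among x_1, …, x_t such that a is adjacent in G to one of x_1, x_2, x_{t−1}, x_t. Then G contains a path on t+1 distW vertices whose vertex set is {a, x_1, …, x_t}; in particular, x_a · x_{x_1} ⋯ x_{x_t} lies in the (t+1)-path ideal I_{t+1}(G). -/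
open MvPolynomial

/-!
If `a` is adjacent to the endpoint `x₁`, prepend it. If `a` is adjacent to `x₂`, claw-freeness at
`x₂` applied to its neighbours `a`, `x₁`, `x₃` produces one of the edges `a x₁`, `a x₃`, `x₁ x₃`,
and these give the paths `a x₁ x₂ x₃ ⋯`, `x₁ x₂ a x₃ ⋯` and `a x₂ x₁ x₃ ⋯` respectively. The other
end of the path is handled by reversal.
-/

section Path

variable {V : Type*} {G : SimpleGraph V} {l l' : List V} {a v x y : V}

theorem isPathList_iff : G.IsPathList l ↔ l.IsChain G.Adj ∧ l.Nodup := Iff.rfl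

theorem isPathList_reverse : G.IsPathList l.reverse ↔ G.IsPathList l := by
  simp only [isPathList_iff, List.isChain_reverse, List.nodup_reverse, G.adj_comm]

/-- The vertex `a` can be absorbed by the path `l`: the vertices of `l` together with `a` can be
rearranged into a path of `G`. Using a permutation of `a :: l` rather than an equality of vertex
sets records the length of the new path as well. -/
def PathAbsorbs (G : SimpleGraph V) (l : List V) (a : V) : Prop :=
  ∃ l' : List V, G.IsPathList l' ∧ l'.Perm (a :: l)

namespace PathAbsorbs

theorem of_isChain (hpath : G.IsPathList l) (ha : a ∉ l) (hchain : l'.IsChain G.Adj)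
    (hperm : l'.Perm (a :: l)) : PathAbsorbs G l a :=
  ⟨l', ⟨hchain, hperm.nodup_iff.2 (List.nodup_cons.2 ⟨ha, hpath.2⟩)⟩, hperm⟩

theorem of_perm (h : PathAbsorbs G l a) (hperm : l.Perm l') : PathAbsorbs G l' a :=
  let ⟨p, hp, hpl⟩ := h
  ⟨p, hp, hpl.trans (hperm.cons a)⟩

theorem of_adj_head (hpath : G.IsPathList (x :: l)) (ha : a ∉ x :: l) (hax : G.Adj a x) :
    PathAbsorbs G (x :: l) a :=
  of_isChain hpath ha (List.isChain_cons_cons.2 ⟨hax, hpath.1⟩) (List.Perm.refl _)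

theorem of_adj_second (hclaw : G.ClawFree) (hpath : G.IsPathList (x :: y :: l))
    (ha : a ∉ x :: y :: l) (hay : G.Adj a y) : PathAbsorbs G (x :: y :: l) a := by
  obtain ⟨hxy, hchain⟩ := List.isChain_cons_cons.1 hpath.1
  cases l with
  | nil =>
    exact of_isChain hpath ha (l' := [x, y, a])
      (by simp only [List.isChain_cons_cons, List.isChain_singleton, hxy, hay.symm, and_self])
      (List.perm_middle (l₁ := [x, y]))
  | cons z r =>
    obtain ⟨hyz, hchain⟩ := List.isChain_cons_cons.1 hchain
    have hxz : x ≠ z := by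
      rintro rfl
      simpa using hpath.2
    rcases hclaw y a x z hay.symm hxy.symm hyz (by grind) (by grind) hxz with hax | haz | hxz
    · exact of_adj_head hpath ha hax
    · exact of_isChain hpath ha (l' := x :: y :: a :: z :: r)
        (by simp only [List.isChain_cons_cons, hxy, hay.symm, haz, hchain, and_self])
        (List.perm_middle (l₁ := [x, y]))
    · exact of_isChain hpath ha (l' := a :: y :: x :: z :: r)
        (by simp only [List.isChain_cons_cons, hay, hxy.symm, hxz, hchain, and_self])
        ((List.Perm.swap x y _).cons a)

theorem of_adj_mem_take_two (hclaw : G.ClawFree) (hpath : G.IsPathList l) (ha : a ∉ l)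
    (hv : v ∈ l.take 2) (hav : G.Adj a v) : PathAbsorbs G l a := by
  match l with
  | [] => simp at hv
  | [x] =>
    obtain rfl : v = x := by simpa using hv
    exact of_adj_head hpath ha hav
  | x :: y :: r =>
    obtain rfl | rfl : v = x ∨ v = y := by simpa using hv
    · exact of_adj_head hpath ha hav
    · exact of_adj_second hclaw hpath ha hav

theorem of_adj_mem_drop_length_sub_two (hclaw : G.ClawFree) (hpath : G.IsPathList l) (ha : a ∉ l)
    (hv : v ∈ l.drop (l.length - 2)) (hav : G.Adj a v) : PathAbsorbs G l a :=
  (of_adj_mem_take_two hclaw (isPathList_reverse.2 hpath) (mt List.mem_reverse.1 ha)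
    (by rwa [List.take_reverse, List.mem_reverse]) hav).of_perm (List.reverse_perm l)

end PathAbsorbs

end Path

section PathIdeal

variable {V K : Type*} [CommRing K] {G : SimpleGraph V} {l : List V} {a : V}

theorem prod_map_X_mem_pathIdeal_s14 (hpath : G.IsPathList l) :
    (l.map X).prod ∈ pathIdeal (K := K) G l.length :=
  Ideal.subset_span ⟨l, hpath, rfl, rfl⟩

theorem PathAbsorbs.X_mul_prod_map_X_mem_pathIdeal (h : PathAbsorbs G l a) :
    X a * (l.map X).prod ∈ pathIdeal (K := K) G (l.length + 1) := by
  obtain ⟨l', hpath, hperm⟩ := h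
  rw [← List.prod_cons, ← List.map_cons, ← (hperm.map X).prod_eq, ← List.length_cons (a := a),
    ← hperm.length_eq]
  exact prod_map_X_mem_pathIdeal_s14 hpath

end PathIdeal

theorem stmt14_general {V K : Type*} [CommRing K] (G : SimpleGraph V)
    (hclaw : G.ClawFree) (t : ℕ) (ht : 2 ≤ t) (l : List V)
    (hpath : G.IsPathList l) (hlen : l.length = t) (a : V) (ha : a ∉ l)
    (hadj : G.Adj a (l.get ⟨0, by omega⟩) ∨ G.Adj a (l.get ⟨1, by omega⟩) ∨
      G.Adj a (l.get ⟨t - 2, by omega⟩) ∨ G.Adj a (l.get ⟨t - 1, by omega⟩)) :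
    (∃ l' : List V, G.IsPathList l' ∧ l'.length = t + 1 ∧
        (∀ v, v ∈ l' ↔ v = a ∨ v ∈ l)) ∧
      X a * (l.map X).prod ∈ pathIdeal (K := K) G (t + 1) := by
  subst hlen
  have habsorbs : PathAbsorbs G l a := by
    rcases hadj with h | h | h | h
    · exact .of_adj_mem_take_two hclaw hpath ha (List.mem_take_iff_getElem.2 ⟨0, by grind⟩) h
    · exact .of_adj_mem_take_two hclaw hpath ha (List.mem_take_iff_getElem.2 ⟨1, by grind⟩) h
    · exact .of_adj_mem_drop_length_sub_two hclaw hpath ha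
        (List.mem_drop_iff_getElem.2 ⟨0, by grind⟩) h
    · exact .of_adj_mem_drop_length_sub_two hclaw hpath ha
        (List.mem_drop_iff_getElem.2 ⟨1, by grind⟩) h
  refine ⟨?_, habsorbs.X_mul_prod_map_X_mem_pathIdeal⟩
  obtain ⟨l', hpath', hperm⟩ := habsorbs
  exact ⟨l', hpath', hperm.length_eq, fun v => hperm.mem_iff.trans List.mem_cons⟩

/-- If `G` is claw-free, `x_1 ⋯ x_t` (`t ≥ 3`) is a path on `t` distinct
vertices of `G`, and `a ∉ {x_1, …, x_t}` is adjacent to one of `x_1, x_2, x_{t-1}, x_t`,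
then `G` has a path on `t+1` distinct vertices with vertex set `{a, x_1, …, x_t}`; in
particular `x_a ⋅ x_{x_1} ⋯ x_{x_t} ∈ I_{t+1}(G)`. -/
theorem stmt14 {V K : Type*} [Fintype V] [Field K] (G : SimpleGraph V)
    (hclaw : G.ClawFree) (t : ℕ) (ht : 3 ≤ t) (l : List V)
    (hpath : G.IsPathList l) (hlen : l.length = t) (a : V) (ha : a ∉ l)
    (hadj : G.Adj a (l.get ⟨0, by omega⟩) ∨ G.Adj a (l.get ⟨1, by omega⟩) ∨
      G.Adj a (l.get ⟨t - 2, by omega⟩) ∨ G.Adj a (l.get ⟨t - 1, by omega⟩)) :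
    (∃ l' : List V, G.IsPathList l' ∧ l'.length = t + 1 ∧
        (∀ v, v ∈ l' ↔ v = a ∨ v ∈ l)) ∧
      X a * (l.map X).prod ∈ pathIdeal (K := K) G (t + 1) :=
  stmt14_general G hclaw t (by omega) l hpath hlen a ha hadj
end
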